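/- Let ũ, μ ∈ ℝ and 0 < ξ < σ, and set σ' = √(σ² − ξ²). Then ∫_ℝ Φ(−|m − ũ| / σ') · (1/ξ) φ((m − μ)/ξ) dm = 2 T( (ũ − μ)/σ , σ'/ξ ), where the integral is the expectation of the conditional error Φ(−|m − ũ|/σ') when m is normally distributed with mean μ and variance ξ². -/

import Mathlib

open MeasureTheory

/-- The standard normal cumulative distribution function. -/
noncomputable def Phi (x : ℝ) : ℝ :=
  ∫ t in Set.Iic x, Real.exp (-t^2/2) / Real.sqrt (2 * Real.pi)

/-- The standard normal density. -/
noncomputable def phiPdf (x : ℝ) : ℝ :=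
  Real.exp (-x^2/2) / Real.sqrt (2 * Real.pi)

/-- Owen's T function. -/
noncomputable def owenT (h a : ℝ) : ℝ :=
  (1 / (2 * Real.pi)) * ∫ x in (0:ℝ)..a, Real.exp (-h^2 * (1 + x^2) / 2) / (1 + x^2)

open Filter Topology Set

lemma phiPdf_eq (x : ℝ) : phiPdf x = ProbabilityTheory.gaussianPDFReal 0 1 x := by
  simp [phiPdf, ProbabilityTheory.gaussianPDFReal, div_eq_inv_mul]

lemma phiPdf_continuous : Continuous phiPdf := by
  unfold phiPdf; fun_prop

lemma phiPdf_nonneg (x : ℝ) : 0 ≤ phiPdf x := by unfold phiPdf; positivity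

lemma phiPdf_le_one (x : ℝ) : phiPdf x ≤ 1 := by
  unfold phiPdf
  have h1 : Real.exp (-x^2/2) ≤ 1 := Real.exp_le_one_iff.2 (by nlinarith [sq_nonneg x])
  have h2 : 1 ≤ Real.sqrt (2 * Real.pi) := by
    rw [Real.one_le_sqrt]; nlinarith [Real.pi_gt_three]
  rw [div_le_one (by positivity)]
  linarith

lemma phiPdf_integrable : Integrable phiPdf := by
  have : phiPdf = ProbabilityTheory.gaussianPDFReal 0 1 := funext phiPdf_eq
  rw [this]
  exact ProbabilityTheory.integrable_gaussianPDFReal 0 1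

lemma Phi_eq_integral (x : ℝ) : Phi x = ∫ t in Iic x, phiPdf t := rfl

lemma Phi_eq_cdf (x : ℝ) :
    Phi x = ProbabilityTheory.cdf (ProbabilityTheory.gaussianReal 0 1) x := by
  rw [ProbabilityTheory.cdf_eq_real, Measure.real,
    ProbabilityTheory.gaussianReal_apply_eq_integral _ one_ne_zero, ENNReal.toReal_ofReal, Phi_eq_integral]
  · simp_rw [phiPdf_eq]
  · exact integral_nonneg fun x => ProbabilityTheory.gaussianPDFReal_nonneg _ _ _

lemma Phi_nonneg (x : ℝ) : 0 ≤ Phi x := by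
  rw [Phi_eq_cdf]; exact ProbabilityTheory.cdf_nonneg _ _

lemma Phi_le_one (x : ℝ) : Phi x ≤ 1 := by
  rw [Phi_eq_cdf]; exact ProbabilityTheory.cdf_le_one _ _

lemma Phi_atBot : Tendsto Phi atBot (𝓝 0) := by
  have : Phi = ProbabilityTheory.cdf (ProbabilityTheory.gaussianReal 0 1) := funext Phi_eq_cdf
  rw [this]; exact ProbabilityTheory.tendsto_cdf_atBot _

lemma Phi_hasDerivAt (x : ℝ) : HasDerivAt Phi (phiPdf x) x := by
  have h : Phi = fun y => (∫ t in (0:ℝ)..y, phiPdf t) + Phi 0 := by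
    funext y
    rw [← intervalIntegral.integral_Iic_sub_Iic phiPdf_integrable.integrableOn
      phiPdf_integrable.integrableOn, Phi_eq_integral, Phi_eq_integral]
    ring
  rw [h]
  exact (intervalIntegral.integral_hasDerivAt_right (phiPdf_continuous.intervalIntegrable _ _)
    (phiPdf_continuous.stronglyMeasurableAtFilter _ _) phiPdf_continuous.continuousAt).add_const _

lemma Phi_continuous : Continuous Phi :=
  continuous_iff_continuousAt.2 fun x => (Phi_hasDerivAt x).continuousAt

lemma Phi_lipschitz : LipschitzWith 1 Phi := by
  refine lipschitzWith_of_nnnorm_deriv_le (fun x => (Phi_hasDerivAt x).differentiableAt) fun x => ?_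
  rw [(Phi_hasDerivAt x).deriv, ← NNReal.coe_le_coe, coe_nnnorm, Real.norm_eq_abs,
    abs_of_nonneg (phiPdf_nonneg x)]
  exact phiPdf_le_one x

noncomputable def errI (a d : ℝ) : ℝ := ∫ z : ℝ, Phi (-|z - d| / a) * phiPdf z

noncomputable def owenJ (a d : ℝ) : ℝ :=
  ∫ x in (0:ℝ)..a, Real.exp (-(d^2 / (1 + a^2)) * (1 + x^2) / 2) / (1 + x^2)

lemma sign_integral (f : ℝ → ℝ) (hf : Integrable f) (he : ∀ x, f (-x) = f x) (b : ℝ) :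
    ∫ w : ℝ, (SignType.sign w : ℝ) * f (w + b) = -2 * ∫ v in (0:ℝ)..b, f v := by
  have h1 : ∫ w : ℝ, (SignType.sign w : ℝ) * f (w + b)
      = ∫ v : ℝ, (SignType.sign (v - b) : ℝ) * f v := by
    rw [← integral_add_right_eq_self (fun v => (SignType.sign (v - b) : ℝ) * f v) b]
    simp
  have hint : Integrable (fun v => (SignType.sign (v - b) : ℝ) * f v) := by
    refine hf.bdd_mul (c := 1) ?_ (ae_of_all _ fun v => ?_)
    · refine Measurable.aestronglyMeasurable ?_
      have hs : Measurable (fun v : ℝ => (SignType.sign v : ℝ)) := by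
        have : (fun v : ℝ => (SignType.sign v : ℝ)) =
          fun v => if 0 < v then 1 else if v < 0 then -1 else 0 := by
          funext v; simp only [sign_apply]; split_ifs <;> simp
        rw [this]
        exact Measurable.ite measurableSet_Ioi measurable_const
          (Measurable.ite measurableSet_Iio measurable_const measurable_const)
      exact hs.comp (measurable_id.sub_const b)
    · rcases lt_trichotomy (v - b) 0 with h | h | h <;> simp [h]
  rw [h1, ← intervalIntegral.integral_Iic_add_Ioi (b := b) hint.integrableOn hint.integrableOn]
  have h2 : ∫ v in Iic b, (SignType.sign (v - b) : ℝ) * f v = - ∫ v in Iic b, f v := by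
    rw [← integral_neg, integral_Iic_eq_integral_Iio, integral_Iic_eq_integral_Iio]
    refine setIntegral_congr_fun measurableSet_Iio fun v hv => ?_
    have : v - b < 0 := sub_neg.2 hv
    simp [this]
  have h3 : ∫ v in Ioi b, (SignType.sign (v - b) : ℝ) * f v = ∫ v in Ioi b, f v := by
    refine setIntegral_congr_fun measurableSet_Ioi fun v hv => ?_
    have : 0 < v - b := sub_pos.2 hv
    simp [this]
  have h4 : ∫ v in Ioi b, f v = ∫ v in Iic (-b), f v := by
    rw [← integral_comp_neg_Ioi]; simp [he]
  have h5 : (∫ v in Iic b, f v) - ∫ v in Iic (-b), f v = ∫ v in (-b)..b, f v :=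
    intervalIntegral.integral_Iic_sub_Iic hf.integrableOn hf.integrableOn
  have h6 : ∫ v in (-b)..0, f v = ∫ v in (0:ℝ)..b, f v := by
    have := intervalIntegral.integral_comp_neg (a := 0) (b := b) f
    simp only [he, neg_zero] at this
    exact this.symm
  have h7 := intervalIntegral.integral_add_adjacent_intervals
    (hf.intervalIntegrable (a := -b) (b := 0)) (hf.intervalIntegrable (a := 0) (b := b))
  rw [h2, h3, h4]
  linarith

lemma errI_hasDerivAt (a d : ℝ) (ha : 0 < a) :
    HasDerivAt (errI a)
      (∫ z : ℝ, phiPdf (-|z - d| / a) * ((SignType.sign (z - d) : ℝ) / a) * phiPdf z) d := by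
  have hc : ∀ x, Continuous fun z => Phi (-|z - x| / a) * phiPdf z := fun x =>
    (Phi_continuous.comp (by fun_prop)).mul phiPdf_continuous
  have hsm : Measurable (fun v : ℝ => (SignType.sign v : ℝ)) := by
    have : (fun v : ℝ => (SignType.sign v : ℝ)) =
      fun v => if 0 < v then 1 else if v < 0 then -1 else 0 := by
      funext v; simp only [sign_apply]; split_ifs <;> simp
    rw [this]
    exact Measurable.ite measurableSet_Ioi measurable_const
      (Measurable.ite measurableSet_Iio measurable_const measurable_const)
  refine (hasDerivAt_integral_of_dominated_loc_of_lip (s := univ)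
    (F := fun x z => Phi (-|z - x| / a) * phiPdf z)
    (bound := fun z => (1 / a) * phiPdf z) univ_mem
    (Eventually.of_forall fun x => (hc x).aestronglyMeasurable) ?_ ?_ ?_ ?_ ?_).2
  · refine phiPdf_integrable.bdd_mul (c := 1)
      (Phi_continuous.comp (by fun_prop)).aestronglyMeasurable (ae_of_all _ fun z => ?_)
    rw [Real.norm_eq_abs, abs_of_nonneg (Phi_nonneg _)]; exact Phi_le_one _
  · refine Measurable.aestronglyMeasurable ?_
    have h1 : Measurable fun z => phiPdf (-|z - d| / a) :=
      (phiPdf_continuous.comp (by fun_prop)).measurable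
    exact (h1.mul ((hsm.comp (measurable_id.sub_const d)).div_const a)).mul
      phiPdf_continuous.measurable
  · refine ae_of_all _ fun z => LipschitzOnWith.of_dist_le_mul fun x _ y _ => ?_
    have h1 := Phi_lipschitz.dist_le_mul (-|z - x| / a) (-|z - y| / a)
    have h0 := phiPdf_nonneg z
    have h3 : |(-|z - x| / a) - (-|z - y| / a)| ≤ (1 / a) * |x - y| := by
      have : (-|z - x| / a) - (-|z - y| / a) = (1 / a) * (|z - y| - |z - x|) := by ring
      rw [this, abs_mul, abs_of_pos (by positivity : (0:ℝ) < 1 / a)]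
      refine mul_le_mul_of_nonneg_left ?_ (by positivity)
      calc |(|z - y| - |z - x|)| ≤ |(z - y) - (z - x)| := abs_abs_sub_abs_le_abs_sub _ _
        _ = |x - y| := by congr 1; ring
    simp only [Real.dist_eq, NNReal.coe_one, one_mul] at h1 ⊢
    rw [← sub_mul, abs_mul, abs_of_nonneg h0, Real.coe_nnabs,
      abs_of_nonneg (by positivity : 0 ≤ (1 / a) * phiPdf z)]
    calc _ ≤ (1 / a) * |x - y| * phiPdf z := by gcongr; exact h1.trans h3
      _ = _ := by ring
  · exact phiPdf_integrable.const_mul _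
  · have : ∀ᵐ z : ℝ, z ≠ d := by simp [ae_iff]
    filter_upwards [this] with z hz
    have h1 : HasDerivAt (fun x => z - x) (-1) d := by
      simpa using (hasDerivAt_id d).const_sub z
    have h2 : HasDerivAt (fun x => |z - x|) ((SignType.sign (z - d) : ℝ) * (-1)) d :=
      (hasDerivAt_abs (sub_ne_zero.2 hz)).comp d h1
    have h3 := ((Phi_hasDerivAt (-|z - d| / a)).comp d (h2.neg.div_const a)).mul_const (phiPdf z)
    refine h3.congr_deriv ?_
    ring

lemma errI_deriv_eq (a d : ℝ) (ha : 0 < a) :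
    (∫ z : ℝ, phiPdf (-|z - d| / a) * ((SignType.sign (z - d) : ℝ) / a) * phiPdf z)
      = -(d / (Real.pi * (1 + a^2))) *
        ∫ x in (0:ℝ)..a, Real.exp (-(d^2 / (1 + a^2)) * (1 + x^2) / 2) := by
  set k := (1 + a^2) / (2 * a^2) with hk
  have hkpos : 0 < k := by positivity
  set b := d * a^2 / (1 + a^2) with hb
  have hc : (1 + a^2) ≠ 0 := by positivity
  have h1 : ∀ z : ℝ, phiPdf (-|z - d| / a) * ((SignType.sign (z - d) : ℝ) / a) * phiPdf z
      = (1 / (2 * Real.pi * a) * Real.exp (-(d^2 / (1 + a^2)) / 2)) *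
        ((SignType.sign (z - d) : ℝ) * Real.exp (-k * (z - d + b)^2)) := by
    intro z
    have e : Real.exp (-(-|z - d| / a)^2 / 2) * Real.exp (-z^2/2)
        = Real.exp (-(d^2 / (1 + a^2)) / 2) * Real.exp (-k * (z - d + b)^2) := by
      rw [← Real.exp_add, ← Real.exp_add]
      congr 1
      rw [div_pow, neg_sq, sq_abs, hk, hb]
      field_simp
      ring
    have hs : Real.sqrt (2 * Real.pi) * Real.sqrt (2 * Real.pi) = 2 * Real.pi :=
      Real.mul_self_sqrt (by positivity)
    unfold phiPdf
    calc _ = (Real.exp (-(-|z - d| / a)^2 / 2) * Real.exp (-z^2/2)) *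
          (SignType.sign (z - d) : ℝ) / (a * (Real.sqrt (2 * Real.pi) * Real.sqrt (2 * Real.pi))) := by
          field_simp
      _ = _ := by rw [e, hs]; field_simp
  simp_rw [h1]
  rw [integral_const_mul, integral_sub_right_eq_self
    (fun w => (SignType.sign w : ℝ) * Real.exp (-k * (w + b)^2)) d,
    sign_integral (fun v => Real.exp (-k * v^2)) (integrable_exp_neg_mul_sq hkpos) (by simp) b]
  have h2 : ∫ v in (0:ℝ)..b, Real.exp (-k * v^2)
      = (a * d / (1 + a^2)) * ∫ x in (0:ℝ)..a, Real.exp (-k * ((a * d / (1 + a^2)) * x)^2) := by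
    have := intervalIntegral.mul_integral_comp_mul_left (a := 0) (b := a)
      (f := fun v => Real.exp (-k * v^2)) (c := a * d / (1 + a^2))
    rw [this, mul_zero]
    congr 1
    rw [hb]; ring
  have h3 : ∫ x in (0:ℝ)..a, Real.exp (-(d^2 / (1 + a^2)) * (1 + x^2) / 2)
      = Real.exp (-(d^2 / (1 + a^2)) / 2) *
        ∫ x in (0:ℝ)..a, Real.exp (-k * ((a * d / (1 + a^2)) * x)^2) := by
    rw [← intervalIntegral.integral_const_mul]
    congr 1; funext x
    rw [← Real.exp_add]
    congr 1
    rw [hk]; field_simp; ring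
  rw [h2, h3]
  field_simp

lemma owenJ_hasDerivAt (a d : ℝ) :
    HasDerivAt (owenJ a) (-(d / (1 + a^2)) *
        ∫ x in (0:ℝ)..a, Real.exp (-(d^2 / (1 + a^2)) * (1 + x^2) / 2)) d := by
  have hx : ∀ x : ℝ, (1 + x^2) ≠ 0 := fun x => by positivity
  have key := (intervalIntegral.hasDerivAt_integral_of_dominated_loc_of_deriv_le
    (a := 0) (b := a) (μ := volume) (x₀ := d)
    (F := fun d x => Real.exp (-(d^2 / (1 + a^2)) * (1 + x^2) / 2) / (1 + x^2))
    (F' := fun d x => -(d / (1 + a^2)) * Real.exp (-(d^2 / (1 + a^2)) * (1 + x^2) / 2))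
    (bound := fun _ => |d| + 1)
    (Metric.ball_mem_nhds d one_pos)
    (Eventually.of_forall fun y => Continuous.aestronglyMeasurable (by fun_prop (disch := exact hx _)))
    (Continuous.intervalIntegrable (by fun_prop (disch := exact hx _)) _ _)
    (Continuous.aestronglyMeasurable (by fun_prop)) ?_ (by simp) ?_).2
  · rw [← intervalIntegral.integral_const_mul]; exact key
  · refine ae_of_all _ fun x _ y hy => ?_
    rw [Metric.mem_ball, Real.dist_eq] at hy
    have h1 : |y| ≤ |d| + 1 := by
      have := abs_sub_abs_le_abs_sub y d
      linarith
    have h2 : Real.exp (-(y^2 / (1 + a^2)) * (1 + x^2) / 2) ≤ 1 := by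
      rw [Real.exp_le_one_iff]
      have : 0 ≤ (y^2 / (1 + a^2)) * (1 + x^2) := by positivity
      linarith
    have h3 : |y| / (1 + a^2) ≤ |y| := div_le_self (abs_nonneg _) (by nlinarith [sq_nonneg a])
    rw [Real.norm_eq_abs, abs_mul, abs_neg, abs_div, abs_of_pos (Real.exp_pos _),
      abs_of_pos (by positivity : 0 < 1 + a^2)]
    calc _ ≤ |y| / (1 + a^2) * 1 := by gcongr
      _ ≤ _ := by linarith
  · refine ae_of_all _ fun x _ y _ => ?_
    have h := (((((hasDerivAt_pow 2 y).div_const (1 + a^2)).neg.mul_const (1 + x^2)).div_const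
      2).exp).div_const (1 + x^2)
    refine h.congr_deriv ?_
    have := hx x
    have := hx a
    simp only [Pi.neg_apply]
    generalize Real.exp (-(y^2 / (1 + a^2)) * (1 + x^2) / 2) = E
    field_simp
    norm_num
    try ring

lemma errI_tendsto (a : ℝ) (ha : 0 < a) : Tendsto (errI a) atTop (𝓝 0) := by
  have h := tendsto_integral_filter_of_dominated_convergence (μ := volume) (l := atTop)
    (F := fun (d : ℝ) z => Phi (-|z - d| / a) * phiPdf z) (f := fun _ => (0:ℝ)) phiPdf
    (Eventually.of_forall fun x => ((Phi_continuous.comp (by fun_prop)).mul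
      phiPdf_continuous).aestronglyMeasurable)
    (Eventually.of_forall fun x => ae_of_all _ fun z => ?_) phiPdf_integrable
    (ae_of_all _ fun z => ?_)
  · rw [integral_zero] at h; exact h
  · rw [Real.norm_eq_abs, abs_of_nonneg (mul_nonneg (Phi_nonneg _) (phiPdf_nonneg _))]
    exact mul_le_of_le_one_left (phiPdf_nonneg _) (Phi_le_one _)
  · have h1 : Tendsto (fun d : ℝ => -|z - d| / a) atTop atBot := by
      refine Tendsto.atBot_div_const ha ?_
      refine tendsto_neg_atTop_atBot.comp ?_
      refine tendsto_abs_atBot_atTop.comp ?_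
      exact tendsto_atBot_add_const_left _ z tendsto_neg_atTop_atBot
    simpa using (Phi_atBot.comp h1).mul_const (phiPdf z)

lemma owenJ_tendsto (a : ℝ) : Tendsto (owenJ a) atTop (𝓝 0) := by
  have hx : ∀ x : ℝ, (1 + x^2) ≠ 0 := fun x => by positivity
  have h := intervalIntegral.tendsto_integral_filter_of_dominated_convergence
    (a := 0) (b := a) (μ := volume) (l := atTop)
    (F := fun (d : ℝ) x => Real.exp (-(d^2 / (1 + a^2)) * (1 + x^2) / 2) / (1 + x^2))
    (f := fun _ => (0:ℝ)) (fun _ => 1)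
    (Eventually.of_forall fun y => Continuous.aestronglyMeasurable (by fun_prop (disch := exact hx _)))
    (Eventually.of_forall fun y => ae_of_all _ fun x _ => ?_) (by simp)
    (ae_of_all _ fun x _ => ?_)
  · rw [intervalIntegral.integral_zero] at h; exact h
  · have h2 : Real.exp (-(y^2 / (1 + a^2)) * (1 + x^2) / 2) ≤ 1 := by
      rw [Real.exp_le_one_iff]
      have : 0 ≤ (y^2 / (1 + a^2)) * (1 + x^2) := by positivity
      linarith
    rw [Real.norm_eq_abs, abs_of_nonneg (by positivity), div_le_one (by positivity)]
    nlinarith [sq_nonneg x]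
  · have h1 : Tendsto (fun d : ℝ => -(d^2 / (1 + a^2)) * (1 + x^2) / 2) atTop atBot := by
      refine Tendsto.atBot_div_const two_pos (Tendsto.atBot_mul_const (by positivity) ?_)
      exact tendsto_neg_atTop_atBot.comp
        (Tendsto.atTop_div_const (by positivity) (tendsto_pow_atTop two_ne_zero))
    simpa using (Real.tendsto_exp_atBot.comp h1).div_const (1 + x^2)

lemma errI_eq (a d : ℝ) (ha : 0 < a) : errI a d = (1 / Real.pi) * owenJ a d := by
  have hd : ∀ x, HasDerivAt (fun y => errI a y - (1 / Real.pi) * owenJ a y) 0 x := by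
    intro x
    have h := (errI_hasDerivAt a x ha).sub ((owenJ_hasDerivAt a x).const_mul (1 / Real.pi))
    rw [errI_deriv_eq a x ha] at h
    refine h.congr_deriv ?_
    field_simp
    ring
  have hconst := is_const_of_deriv_eq_zero (fun x => (hd x).differentiableAt)
    (fun x => (hd x).deriv)
  have ht := (errI_tendsto a ha).sub ((owenJ_tendsto a).const_mul (1 / Real.pi))
  have h0 : errI a d - (1 / Real.pi) * owenJ a d = 0 := by
    refine tendsto_nhds_unique (f := fun _ : ℝ => errI a d - (1 / Real.pi) * owenJ a d)
      (l := atTop) tendsto_const_nhds ?_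
    simp only [mul_zero, sub_zero] at ht
    exact ht.congr fun y => hconst y d
  linarith

/-- The expectation of the conditional error `Φ(−|m − ũ|/σ')` when
`m ∼ N(μ, ξ²)` equals `2 T((ũ − μ)/σ, σ'/ξ)` with `σ' = √(σ² − ξ²)`. -/
theorem expected_conditional_error_owenT (utld μ ξ σ : ℝ) (hξ : 0 < ξ) (hξσ : ξ < σ) :
    (∫ m : ℝ, Phi (-|m - utld| / Real.sqrt (σ^2 - ξ^2)) * ((1/ξ) * phiPdf ((m - μ)/ξ)))
      = 2 * owenT ((utld - μ)/σ) (Real.sqrt (σ^2 - ξ^2) / ξ) := by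
  have hpos : 0 < σ^2 - ξ^2 := by nlinarith
  have hσ : 0 < σ := hξ.trans hξσ
  set s := Real.sqrt (σ^2 - ξ^2) with hs
  have hs0 : 0 < s := Real.sqrt_pos.2 hpos
  have hs2 : s^2 = σ^2 - ξ^2 := Real.sq_sqrt hpos.le
  have h1 : (∫ m : ℝ, Phi (-|m - utld| / s) * ((1/ξ) * phiPdf ((m - μ)/ξ)))
      = errI (s / ξ) ((utld - μ) / ξ) := by
    set g : ℝ → ℝ := fun z => (1/ξ) * (Phi (-|z - (utld - μ) / ξ| / (s / ξ)) * phiPdf z) with hg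
    have e : ∀ m : ℝ, Phi (-|m - utld| / s) * ((1/ξ) * phiPdf ((m - μ)/ξ)) = g ((m - μ) / ξ) := by
      intro m
      have : -|(m - μ) / ξ - (utld - μ) / ξ| / (s / ξ) = -|m - utld| / s := by
        rw [← sub_div, abs_div, abs_of_pos hξ, sub_sub_sub_cancel_right]
        field_simp
      simp only [hg, this]
      ring
    simp_rw [e]
    rw [integral_sub_right_eq_self (fun m => g (m / ξ)) μ, Measure.integral_comp_div,
      abs_of_pos hξ, hg, integral_const_mul, smul_eq_mul, errI]
    field_simp
  have h2 : ((utld - μ) / ξ)^2 / (1 + (s / ξ)^2) = ((utld - μ)/σ)^2 := by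
    rw [div_pow s, hs2]
    field_simp
    ring
  rw [h1, errI_eq _ _ (by positivity), owenJ, owenT, h2]
  field_simp
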